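/- arXiv:1901.04861 — 2 statements merged into one kernel-verified Lean document; each statement's English description precedes it below -/
import Mathlib

section
/- (Lemma C.2(i), Kolmogorov–Smirnov conditional moment inequality functional, first order degeneracy.) Let F be a nonempty compact metric space. For a pair θ = (θ⁽¹⁾, θ⁽²⁾) of bounded real-valued functions on F define φ(θ) = sup_{f ∈ F} { max{θ⁽¹⁾(f), 0}² + θ⁽²⁾(f)² }. Suppose θ⁽¹⁾(f) ≤ 0 for all f ∈ F and θ⁽²⁾ ≡ 0, so that φ(θ) = 0. Then for every sequence t_n ↓ 0 and every sequence of pairs h_n = (h_n⁽¹⁾, h_n⁽²⁾) of bounded functions on F converging in supremum norm (coordinatewise) to a pair h of bounded functions, one has φ(θ + t_n h_n)/t_n → 0; that is, φ is Hadamard directionally differentiable at θ with identically zero derivative. -/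
open Filter Topology

/-!
At a pair `(θ1, 0)` with `θ1 ≤ 0`, the positive part of `θ1 + h1` is at most `|h1|`, so the
functional is quadratic in the perturbation: it is at most `‖h1‖_∞ ^ 2 + ‖h2‖_∞ ^ 2`. Along
perturbations `t n • h n` with `h n` eventually uniformly bounded it is therefore `O(t n ^ 2)`,
which is `o(t n)`.
-/

open Asymptotics

section LinearOrderedAddCommGroup

variable {G : Type*} [AddCommGroup G] [LinearOrder G] [IsOrderedAddMonoid G]

lemma exists_eventually_forall_abs_le_of_abs_sub_le {ι α : Type*} {l : Filter ι} {u : ι → α → G}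
    {v : α → G} {r : G} (hv : ∃ C, ∀ a, |v a| ≤ C)
    (huv : ∀ᶠ i in l, ∀ a, |u i a - v a| ≤ r) :
    ∃ C, ∀ᶠ i in l, ∀ a, |u i a| ≤ C := by
  obtain ⟨C, hC⟩ := hv
  refine ⟨r + C, huv.mono fun i hi a => ?_⟩
  calc |u i a| = |u i a - v a + v a| := by rw [sub_add_cancel]
    _ ≤ |u i a - v a| + |v a| := abs_add_le _ _
    _ ≤ r + C := add_le_add (hi a) (hC a)

lemma max_add_zero_le_abs {a : G} (ha : a ≤ 0) (b : G) : max (a + b) 0 ≤ |b| :=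
  max_le ((add_le_of_nonpos_left ha).trans (le_abs_self b)) (abs_nonneg b)

end LinearOrderedAddCommGroup

/-- The Kolmogorov–Smirnov conditional moment inequality functional `φ` at the pair `(θ1, θ2)`.
The supremum is that of `ℝ`, hence `0` if the family is unbounded or `F` is empty. -/
noncomputable def ksFunctional {F : Type*} (θ1 θ2 : F → ℝ) : ℝ :=
  ⨆ f, ((max (θ1 f) 0) ^ 2 + (θ2 f) ^ 2)

section ksFunctional

variable {F : Type*} {θ1 : F → ℝ}

lemma ksFunctional_nonneg (θ1 θ2 : F → ℝ) : 0 ≤ ksFunctional θ1 θ2 :=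
  Real.iSup_nonneg fun _ => by positivity

lemma ksFunctional_add_le [Nonempty F] (hθ1 : ∀ f, θ1 f ≤ 0) {h1 h2 : F → ℝ} {C1 C2 : ℝ}
    (hC1 : ∀ f, |h1 f| ≤ C1) (hC2 : ∀ f, |h2 f| ≤ C2) :
    ksFunctional (θ1 + h1) h2 ≤ C1 ^ 2 + C2 ^ 2 := by
  refine ciSup_le fun f => add_le_add ?_ ?_
  · exact pow_le_pow_left₀ (le_max_right _ _)
      ((max_add_zero_le_abs (hθ1 f) (h1 f)).trans (hC1 f)) 2
  · exact sq_le_sq.mpr ((hC2 f).trans (le_abs_self C2))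

variable [Nonempty F] {ι : Type*} {l : Filter ι} {h1 h2 : ι → F → ℝ}

lemma ksFunctional_add_smul_isBigO_sq (hθ1 : ∀ f, θ1 f ≤ 0) (t : ι → ℝ)
    (hh1 : ∃ C, ∀ᶠ i in l, ∀ f, |h1 i f| ≤ C) (hh2 : ∃ C, ∀ᶠ i in l, ∀ f, |h2 i f| ≤ C) :
    (fun i => ksFunctional (θ1 + t i • h1 i) (t i • h2 i)) =O[l] fun i => t i ^ 2 := by
  obtain ⟨C1, hC1⟩ := hh1
  obtain ⟨C2, hC2⟩ := hh2
  refine IsBigO.of_bound (C1 ^ 2 + C2 ^ 2) ?_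
  filter_upwards [hC1, hC2] with i hi1 hi2
  have abs_smul_le {h : F → ℝ} {C : ℝ} (hC : ∀ f, |h f| ≤ C) (f : F) :
      |(t i • h) f| ≤ |t i| * C := by
    rw [Pi.smul_apply, smul_eq_mul, abs_mul]
    exact mul_le_mul_of_nonneg_left (hC f) (abs_nonneg _)
  calc ‖ksFunctional (θ1 + t i • h1 i) (t i • h2 i)‖
      = ksFunctional (θ1 + t i • h1 i) (t i • h2 i) :=
        Real.norm_of_nonneg (ksFunctional_nonneg _ _)
    _ ≤ (|t i| * C1) ^ 2 + (|t i| * C2) ^ 2 :=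
        ksFunctional_add_le hθ1 (abs_smul_le hi1) (abs_smul_le hi2)
    _ = (C1 ^ 2 + C2 ^ 2) * ‖t i ^ 2‖ := by
        rw [norm_pow, Real.norm_eq_abs]
        ring

theorem ks_cmi_first_order_degeneracy_general (hθ1 : ∀ f, θ1 f ≤ 0) {t : ι → ℝ}
    (ht : Tendsto t l (𝓝 0)) (hh1 : ∃ C, ∀ᶠ i in l, ∀ f, |h1 i f| ≤ C)
    (hh2 : ∃ C, ∀ᶠ i in l, ∀ f, |h2 i f| ≤ C) :
    (fun i => ksFunctional (θ1 + t i • h1 i) (t i • h2 i)) =o[l] t :=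
  (ksFunctional_add_smul_isBigO_sq hθ1 t hh1 hh2).trans_isLittleO
    ((isLittleO_pow_id one_lt_two).comp_tendsto ht)

end ksFunctional

/-- Lemma C.2(i): the Kolmogorov–Smirnov conditional moment inequality functional
`φ(θ) = sup_{f∈F} { max{θ⁽¹⁾(f),0}² + θ⁽²⁾(f)² }` is Hadamard directionally differentiable
with identically zero derivative at any `θ = (θ⁽¹⁾, 0)` with `θ⁽¹⁾ ≤ 0`:
`φ(θ + t_n h_n)/t_n → 0`. -/
theorem ks_cmi_first_order_degeneracy
    (F : Type*) [MetricSpace F] [CompactSpace F] [Nonempty F]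
    (θ1 : F → ℝ) (hθ1b : ∃ C, ∀ f, |θ1 f| ≤ C) (hθ1np : ∀ f, θ1 f ≤ 0)
    (t : ℕ → ℝ) (ht : ∀ n, 0 < t n) (htlim : Tendsto t atTop (𝓝 0))
    (h1 h2 : ℕ → F → ℝ) (hl1 hl2 : F → ℝ)
    (hh1b : ∀ n, ∃ C, ∀ f, |h1 n f| ≤ C) (hh2b : ∀ n, ∃ C, ∀ f, |h2 n f| ≤ C)
    (hl1b : ∃ C, ∀ f, |hl1 f| ≤ C) (hl2b : ∃ C, ∀ f, |hl2 f| ≤ C)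
    (hconv1 : ∀ ε > (0 : ℝ), ∀ᶠ n in atTop, ∀ f, |h1 n f - hl1 f| ≤ ε)
    (hconv2 : ∀ ε > (0 : ℝ), ∀ᶠ n in atTop, ∀ f, |h2 n f - hl2 f| ≤ ε) :
    Tendsto (fun n =>
        (⨆ f : F, ((max (θ1 f + t n * h1 n f) 0) ^ 2 + (t n * h2 n f) ^ 2)) / t n)
      atTop (𝓝 0) := by
  exact (ks_cmi_first_order_degeneracy_general hθ1np htlim
    (exists_eventually_forall_abs_le_of_abs_sub_le hl1b (hconv1 1 one_pos))
    (exists_eventually_forall_abs_le_of_abs_sub_le hl2b (hconv2 1 one_pos))).tendsto_div_nhds_zero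
end

section
/- (Lemma C.3(ii), GMM overidentification functional, second order derivative.) Let Γ ⊂ ℝ^k be compact, W an m×m real symmetric positive definite matrix, and Θ : ℝ^k → ℝ^m continuously differentiable with Jacobian matrix J(γ) ∈ ℝ^{m×k} at γ. Let θ be the restriction of Θ to Γ and define φ(ϑ) = inf_{γ ∈ Γ} ϑ(γ)ᵀ W ϑ(γ) for bounded ϑ : Γ → ℝ^m. Assume: (a) Γ₀ = {γ ∈ Γ : θ(γ) = 0} is nonempty and contained in the interior of Γ; (b) there exist κ ∈ (0,1], C > 0 and ε̄ > 0 such that for every ε ∈ (0, ε̄] and every γ ∈ Γ with dist(γ, Γ₀) ≥ ε one has ‖θ(γ)‖ ≥ C ε^κ. Then for every sequence t_n ↓ 0 and every sequence of bounded functions h_n : Γ → ℝ^m converging in supremum norm to a continuous function h : Γ → ℝ^m, one has φ(θ + t_n h_n)/t_n² → inf_{γ₀ ∈ Γ₀} inf_{v ∈ ℝ^k} (h(γ₀) − J(γ₀) v)ᵀ W (h(γ₀) − J(γ₀) v). -/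
open Filter Topology Matrix

/-!
Dividing by `t ^ 2`, the claim concerns the infimum over `γ ∈ Γ` of `Q (t⁻¹ • Θ γ + hₜ γ)`, where
`Q x = xᵀ W x` is coercive. The upper bound comes from the competitors `γ = γ₀ - t • v`, which lie
in `Γ` because `γ₀` is interior. For the lower bound, coercivity forces `‖Θ γ‖ = O(t)` at
near-minimisers, and `κ ≤ 1` turns this into `dist(γ, Γ₀) = O(t)`. So `t⁻¹ • (p - γ)`, with `p` a
nearest point of `Γ₀`, stays in a compact ball, and along any ultrafilter `p → γ₀` and
`t⁻¹ • (p - γ) → v`. Since the base point `p` moves, strict differentiability at `γ₀` is what gives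
`t⁻¹ • Θ γ → -J(γ₀) v`.
-/

section Expansion

lemma tendsto_smul_sub_of_hasStrictFDerivAt {𝕜 ι E F : Type*} [NontriviallyNormedField 𝕜]
    [NormedAddCommGroup E] [NormedSpace 𝕜 E] [NormedAddCommGroup F] [NormedSpace 𝕜 F]
    {l : Filter ι} {f : E → F} {f' : E →L[𝕜] F} {x v : E} (hf : HasStrictFDerivAt f f' x)
    {p q : ι → E} (hp : Tendsto p l (𝓝 x)) (hq : Tendsto q l (𝓝 x)) {c : ι → 𝕜}
    (hv : Tendsto (fun i => c i • (p i - q i)) l (𝓝 v)) :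
    Tendsto (fun i => c i • (f (p i) - f (q i))) l (𝓝 (f' v)) := by
  have hremainder : Tendsto (fun i => c i • (f (p i) - f (q i) - f' (p i - q i))) l (𝓝 0) := by
    rw [← Asymptotics.isLittleO_one_iff 𝕜]
    exact ((Asymptotics.isBigO_refl c l).smul_isLittleO
      (hf.isLittleO.comp_tendsto (hp.prodMk_nhds hq))).trans_isBigO (hv.isBigO_one 𝕜)
  have hlinear : Tendsto (fun i => f' (c i • (p i - q i))) l (𝓝 (f' v)) :=
    (f'.continuous.tendsto v).comp hv
  simpa [smul_sub] using hremainder.add hlinear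

variable {ι E F : Type*} [NormedAddCommGroup E] [NormedSpace ℝ E]
  [NormedAddCommGroup F] [NormedSpace ℝ F] {l : Filter ι} {Γ : Set E} {Θ h : E → F}
  {hn : ι → E → F} {t : ι → ℝ} {g v : E}

lemma tendsto_inv_smul_add_of_hasStrictFDerivAt {J : E →L[ℝ] F} (hΘ : HasStrictFDerivAt Θ J g)
    (hh : ContinuousWithinAt h Γ g) (hconv : TendstoUniformlyOn hn h l Γ)
    (ht : Tendsto t l (𝓝[≠] 0)) {p γ : ι → E} (hp : Tendsto p l (𝓝 g))
    (hΘp : ∀ᶠ i in l, Θ (p i) = 0) (hγ : ∀ᶠ i in l, γ i ∈ Γ)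
    (hv : Tendsto (fun i => (t i)⁻¹ • (p i - γ i)) l (𝓝 v)) :
    Tendsto (fun i => (t i)⁻¹ • Θ (γ i) + hn i (γ i)) l (𝓝 (h g - J v)) := by
  obtain ⟨ht0, htne⟩ := tendsto_nhdsWithin_iff.1 ht
  have hγg : Tendsto γ l (𝓝 g) := by
    have hlim := hp.sub (ht0.smul hv)
    rw [zero_smul, sub_zero] at hlim
    refine hlim.congr' ?_
    filter_upwards [htne] with i hi
    rw [smul_inv_smul₀ hi, sub_sub_cancel]
  have hΘγ : Tendsto (fun i => (t i)⁻¹ • Θ (γ i)) l (𝓝 (-J v)) := by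
    refine (tendsto_smul_sub_of_hasStrictFDerivAt hΘ hp hγg hv).neg.congr' ?_
    filter_upwards [hΘp] with i hi
    rw [hi, zero_sub, smul_neg, neg_neg]
  have hhγ : Tendsto (fun i => hn i (γ i)) l (𝓝 (h g)) :=
    hconv.tendsto_comp hh (tendsto_nhdsWithin_iff.2 ⟨hγg, hγ⟩)
  simpa only [neg_add_eq_sub] using hΘγ.add hhγ

lemma eventually_exists_lt_of_apply_sub_lt {Q : F → ℝ} (hQ : Continuous Q) {J : E →L[ℝ] F}
    (hΘ : HasStrictFDerivAt Θ J g) (hΘg : Θ g = 0) (hg : Γ ∈ 𝓝 g)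
    (hh : ContinuousWithinAt h Γ g) (hconv : TendstoUniformlyOn hn h l Γ)
    (ht : Tendsto t l (𝓝[≠] 0)) {a : ℝ} (ha : Q (h g - J v) < a) :
    ∀ᶠ i in l, ∃ γ ∈ Γ, Q ((t i)⁻¹ • Θ γ + hn i γ) < a := by
  obtain ⟨ht0, htne⟩ := tendsto_nhdsWithin_iff.1 ht
  have hcompetitor : ∀ᶠ i in l, g - t i • v ∈ Γ := by
    have hlim : Tendsto (fun i => g - t i • v) l (𝓝 g) := by
      simpa using (ht0.smul_const v).const_sub g
    exact hlim hg
  have hdir : Tendsto (fun i => (t i)⁻¹ • (g - (g - t i • v))) l (𝓝 v) := by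
    refine tendsto_const_nhds.congr' ?_
    filter_upwards [htne] with i hi
    rw [sub_sub_cancel, inv_smul_smul₀ hi]
  have hlim := (hQ.tendsto _).comp (tendsto_inv_smul_add_of_hasStrictFDerivAt hΘ hh hconv ht
    tendsto_const_nhds (.of_forall fun _ => hΘg) hcompetitor hdir)
  filter_upwards [hcompetitor, hlim.eventually_lt_const ha] with i hmem hlt
  exact ⟨_, hmem, hlt⟩

end Expansion

section Localization

variable {ι E F : Type*} [PseudoMetricSpace E] [SeminormedAddCommGroup F] {Γ Γ₀ : Set E}
  {Θ h : E → F}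

lemma mul_min_infDist_le_norm_of_mul_rpow_le
    {κ C δ : ℝ} (hκ : κ ≤ 1) (hC : 0 ≤ C) (hδ : 0 < δ)
    (hsep : ∀ ε ∈ Set.Ioc 0 δ, ∀ γ ∈ Γ, ε ≤ Metric.infDist γ Γ₀ → C * ε ^ κ ≤ ‖Θ γ‖)
    {γ : E} (hγ : γ ∈ Γ) : C * min (Metric.infDist γ Γ₀) (min δ 1) ≤ ‖Θ γ‖ := by
  set ε := min (Metric.infDist γ Γ₀) (min δ 1)
  have hεδ : ε ≤ δ := (min_le_right _ _).trans (min_le_left _ _)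
  have hε1 : ε ≤ 1 := (min_le_right _ _).trans (min_le_right _ _)
  have hε0 : 0 ≤ ε := le_min Metric.infDist_nonneg (by positivity)
  rcases hε0.eq_or_lt with hzero | hpos
  · simp [← hzero]
  calc C * ε ≤ C * ε ^ κ := by
        gcongr
        simpa using Real.rpow_le_rpow_of_exponent_ge hpos hε1 hκ
    _ ≤ ‖Θ γ‖ := hsep ε ⟨hpos, hεδ⟩ γ hγ (min_le_left _ _)

variable [NormedSpace ℝ F]

lemma norm_le_mul_of_norm_inv_smul_add_le {s R H : ℝ} (hs : 0 < s) {x y : F}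
    (hxy : ‖s⁻¹ • x + y‖ ≤ R) (hy : ‖y‖ ≤ H) : ‖x‖ ≤ s * (R + H) := by
  have hx : ‖s⁻¹ • x‖ ≤ R + H :=
    calc ‖s⁻¹ • x‖ = ‖(s⁻¹ • x + y) - y‖ := by rw [add_sub_cancel_right]
      _ ≤ ‖s⁻¹ • x + y‖ + ‖y‖ := norm_sub_le _ _
      _ ≤ R + H := add_le_add hxy hy
  rwa [norm_smul, norm_inv, Real.norm_of_nonneg hs.le, inv_mul_le_iff₀ hs] at hx

lemma eventually_infDist_le_of_norm_inv_smul_add_le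
    {l : Filter ι} {hn : ι → E → F} {t : ι → ℝ} {C δ H : ℝ} (hC : 0 < C) (hδ : 0 < δ)
    (hΘ : ∀ γ ∈ Γ, C * min (Metric.infDist γ Γ₀) δ ≤ ‖Θ γ‖)
    (hH : ∀ γ ∈ Γ, ‖h γ‖ ≤ H) (hconv : TendstoUniformlyOn hn h l Γ)
    (ht : Tendsto t l (𝓝[>] 0)) (R : ℝ) :
    ∃ K, ∀ᶠ i in l, ∀ γ ∈ Γ, ‖(t i)⁻¹ • Θ γ + hn i γ‖ ≤ R → Metric.infDist γ Γ₀ ≤ t i * K := by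
  obtain ⟨ht0, htpos⟩ := tendsto_nhdsWithin_iff.1 ht
  have hsmall : ∀ᶠ i in l, t i * (R + (H + 1)) < C * δ := by
    have hlim := ht0.mul_const (R + (H + 1))
    rw [zero_mul] at hlim
    exact hlim.eventually_lt_const (by positivity)
  refine ⟨(R + (H + 1)) / C, ?_⟩
  filter_upwards [htpos, hsmall, Metric.tendstoUniformlyOn_iff.1 hconv 1 one_pos]
    with i hti hlt hclose γ hγ hR
  have hhn : ‖hn i γ‖ ≤ H + 1 := by
    have hdist := hclose γ hγ
    rw [dist_eq_norm'] at hdist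
    linarith [norm_le_norm_add_norm_sub' (hn i γ) (h γ), hH γ hγ]
  have hmin : C * min (Metric.infDist γ Γ₀) δ ≤ t i * (R + (H + 1)) :=
    (hΘ γ hγ).trans (norm_le_mul_of_norm_inv_smul_add_le hti hR hhn)
  rw [← mul_div_assoc, le_div_iff₀' hC]
  rcases min_choice (Metric.infDist γ Γ₀) δ with hd | hd <;> rw [hd] at hmin
  · exact hmin
  · exact absurd hmin hlt.not_ge

end Localization

section LowerBound

variable {ι E F : Type*} [NormedAddCommGroup E] [NormedSpace ℝ E] [ProperSpace E]
  [NormedAddCommGroup F] [NormedSpace ℝ F] {Γ Γ₀ : Set E} {Θ h : E → F} {J : E → E →L[ℝ] F}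
  {hn : ι → E → F} {t : ι → ℝ}

lemma exists_tendsto_inv_smul_add_of_infDist_le {U : Ultrafilter ι} (hΓ₀ : IsCompact Γ₀)
    (hne : Γ₀.Nonempty) (hzero : ∀ g ∈ Γ₀, Θ g = 0)
    (hΘ : ∀ g ∈ Γ₀, HasStrictFDerivAt Θ (J g) g) (hh : ∀ g ∈ Γ₀, ContinuousWithinAt h Γ g)
    (hconv : TendstoUniformlyOn hn h U Γ) (ht : Tendsto t U (𝓝[>] 0)) {γ : ι → E} {K : ℝ}
    (hγ : ∀ᶠ i in U, γ i ∈ Γ) (hK : ∀ᶠ i in U, Metric.infDist (γ i) Γ₀ ≤ t i * K) :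
    ∃ g ∈ Γ₀, ∃ v, Tendsto (fun i => (t i)⁻¹ • Θ (γ i) + hn i (γ i)) U (𝓝 (h g - J g v)) := by
  choose p hpΓ₀ hpdist using fun i => hΓ₀.exists_infDist_eq_dist hne (γ i)
  have hbounded : ∀ᶠ i in U, (t i)⁻¹ • (p i - γ i) ∈ Metric.closedBall 0 K := by
    filter_upwards [hK, (tendsto_nhdsWithin_iff.1 ht).2] with i hi hti
    rw [mem_closedBall_zero_iff, norm_smul, norm_inv, Real.norm_of_nonneg hti.le,
      inv_mul_le_iff₀ hti, ← dist_eq_norm', ← hpdist]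
    exact hi
  obtain ⟨g, hg, hpg⟩ := hΓ₀.ultrafilter_le_nhds (U.map p)
    (tendsto_principal.2 (.of_forall hpΓ₀))
  obtain ⟨v, -, hv⟩ := (isCompact_closedBall (0 : E) K).ultrafilter_le_nhds
    (U.map fun i => (t i)⁻¹ • (p i - γ i)) (tendsto_principal.2 hbounded)
  exact ⟨g, hg, v, tendsto_inv_smul_add_of_hasStrictFDerivAt (hΘ g hg) (hh g hg) hconv
    (ht.mono_right (nhdsGT_le_nhdsNE 0)) hpg (.of_forall fun i => hzero _ (hpΓ₀ i)) hγ hv⟩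

lemma eventually_forall_le_of_forall_lt_apply_sub {l : Filter ι} {Q : F → ℝ} (hQ : Continuous Q)
    {C δ H b R : ℝ} (hR : ∀ x, Q x < b → ‖x‖ ≤ R) (hΓ₀ : IsCompact Γ₀) (hne : Γ₀.Nonempty)
    (hzero : ∀ g ∈ Γ₀, Θ g = 0) (hΘ : ∀ g ∈ Γ₀, HasStrictFDerivAt Θ (J g) g)
    (hC : 0 < C) (hδ : 0 < δ) (hsep : ∀ γ ∈ Γ, C * min (Metric.infDist γ Γ₀) δ ≤ ‖Θ γ‖)
    (hh : ∀ g ∈ Γ₀, ContinuousWithinAt h Γ g) (hH : ∀ γ ∈ Γ, ‖h γ‖ ≤ H)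
    (hconv : TendstoUniformlyOn hn h l Γ) (ht : Tendsto t l (𝓝[>] 0))
    (hb : ∀ g ∈ Γ₀, ∀ v, b < Q (h g - J g v)) :
    ∀ᶠ i in l, ∀ γ ∈ Γ, b ≤ Q ((t i)⁻¹ • Θ γ + hn i γ) := by
  refine mem_iff_ultrafilter.2 fun U hU => by_contra fun hfail => ?_
  have hbad : ∀ᶠ i in U, ∃ γ ∈ Γ, Q ((t i)⁻¹ • Θ γ + hn i γ) < b := by
    simpa only [not_forall, not_le, exists_prop] using Ultrafilter.eventually_not.2 hfail
  obtain ⟨γ, hγ⟩ := hbad.choice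
  obtain ⟨K, hK⟩ := eventually_infDist_le_of_norm_inv_smul_add_le hC hδ hsep hH hconv ht R
  have hdist : ∀ᶠ i in U, Metric.infDist (γ i) Γ₀ ≤ t i * K := by
    filter_upwards [hU hK, hγ] with i hKi hγi
    exact hKi _ hγi.1 (hR _ hγi.2)
  obtain ⟨g, hg, v, hlim⟩ := exists_tendsto_inv_smul_add_of_infDist_le hΓ₀ hne hzero hΘ hh
    (fun u hu => hU (hconv u hu)) (ht.mono_left hU) (hγ.mono fun _ hi => hi.1) hdist
  have hle : Q (h g - J g v) ≤ b :=
    le_of_tendsto ((hQ.tendsto _).comp hlim) (hγ.mono fun _ hi => hi.2.le)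
  exact (hb g hg v).not_ge hle

end LowerBound

section Coercivity

lemma exists_pos_mul_norm_sq_le {F : Type*} [NormedAddCommGroup F] [NormedSpace ℝ F]
    [ProperSpace F] {Q : F → ℝ} (hQ : Continuous Q) (hpos : ∀ x ≠ 0, 0 < Q x)
    (hsmul : ∀ (a : ℝ) x, Q (a • x) = a ^ 2 * Q x) : ∃ c > 0, ∀ x, c * ‖x‖ ^ 2 ≤ Q x := by
  have hzero : Q 0 = 0 := by simpa using hsmul 0 0
  rcases subsingleton_or_nontrivial F with hF | hF
  · exact ⟨1, one_pos, fun x => by simp [Subsingleton.elim x 0, hzero]⟩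
  obtain ⟨u, hu, hmin⟩ := (isCompact_sphere (0 : F) 1).exists_isMinOn
    (NormedSpace.sphere_nonempty.2 zero_le_one) hQ.continuousOn
  refine ⟨Q u, hpos u (ne_zero_of_mem_unit_sphere ⟨u, hu⟩), fun x => ?_⟩
  rcases eq_or_ne x 0 with rfl | hx
  · simp [hzero]
  have hnorm : ‖x‖ ≠ 0 := norm_ne_zero_iff.2 hx
  have hunit : ‖x‖⁻¹ • x ∈ Metric.sphere (0 : F) 1 := by simp [norm_smul, hnorm]
  calc Q u * ‖x‖ ^ 2 ≤ Q (‖x‖⁻¹ • x) * ‖x‖ ^ 2 := by gcongr; exact hmin hunit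
    _ = Q x := by rw [hsmul]; field_simp

variable {n : Type*} [Fintype n]

lemma continuous_dotProduct_mulVec (W : Matrix n n ℝ) :
    Continuous fun x : EuclideanSpace ℝ n => x ⬝ᵥ W *ᵥ x := by
  have hofLp : Continuous fun x : EuclideanSpace ℝ n => x.ofLp := by fun_prop
  exact hofLp.dotProduct (continuous_const.matrix_mulVec hofLp)

lemma smul_dotProduct_mulVec_smul (W : Matrix n n ℝ) (a : ℝ) (x : EuclideanSpace ℝ n) :
    (a • x) ⬝ᵥ W *ᵥ (a • x) = a ^ 2 * (x ⬝ᵥ W *ᵥ x) := by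
  simp [mulVec_smul, pow_two, mul_assoc]

lemma exists_pos_mul_norm_sq_le_dotProduct_mulVec {W : Matrix n n ℝ} (hW : W.PosDef) :
    ∃ c > 0, ∀ x : EuclideanSpace ℝ n, c * ‖x‖ ^ 2 ≤ x ⬝ᵥ W *ᵥ x := by
  refine exists_pos_mul_norm_sq_le (continuous_dotProduct_mulVec W) (fun x hx => ?_)
    (smul_dotProduct_mulVec_smul W)
  simpa using hW.dotProduct_mulVec_pos (x := x.ofLp) (by simpa using hx)

end Coercivity

section Infima

lemma iInf_apply_add_smul_div_sq {ι F : Type*} [AddCommGroup F] [Module ℝ F] {Q : F → ℝ}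
    (hQ : ∀ (a : ℝ) x, Q (a • x) = a ^ 2 * Q x) (x y : ι → F) {s : ℝ} (hs : s ≠ 0) :
    (⨅ i, Q (x i + s • y i)) / s ^ 2 = ⨅ i, Q (s⁻¹ • x i + y i) := by
  rw [div_eq_inv_mul, Real.mul_iInf_of_nonneg (by positivity)]
  congr 1 with i
  rw [← inv_pow, ← hQ, smul_add, inv_smul_smul₀ hs]

lemma tendsto_ciInf_of_eventually {ι α β R : Type*}
    [ConditionallyCompleteLinearOrder R] [DenselyOrdered R] [TopologicalSpace R] [OrderTopology R]
    [Nonempty α] [Nonempty β] {l : Filter ι} {f : ι → α → R} {φ : β → R}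
    (hf : ∀ i, BddBelow (Set.range (f i)))
    (hφ : BddBelow (Set.range φ))
    (hlower : ∀ b, (∀ y, b < φ y) → ∀ᶠ i in l, ∀ x, b ≤ f i x)
    (hupper : ∀ a y, φ y < a → ∀ᶠ i in l, ∃ x, f i x < a) :
    Tendsto (fun i => ⨅ x, f i x) l (𝓝 (⨅ y, φ y)) := by
  refine tendsto_order.2 ⟨fun a ha => ?_, fun a ha => ?_⟩
  · obtain ⟨b, hab, hb⟩ := exists_between ha
    filter_upwards [hlower b fun y => hb.trans_le (ciInf_le hφ y)] with i hi
    exact hab.trans_le (le_ciInf hi)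
  · obtain ⟨y, hy⟩ := exists_lt_of_ciInf_lt ha
    filter_upwards [hupper a y hy] with i ⟨x, hx⟩
    exact (ciInf_le (hf i) x).trans_lt hx

end Infima

theorem gmm_overid_second_order_hadamard_general {ι E F : Type*}
    [NormedAddCommGroup E] [NormedSpace ℝ E] [ProperSpace E]
    [NormedAddCommGroup F] [NormedSpace ℝ F] {l : Filter ι} {Γ Γ₀ : Set E}
    {Q : F → ℝ} (hQ : Continuous Q) (hQsmul : ∀ (a : ℝ) x, Q (a • x) = a ^ 2 * Q x)
    {c : ℝ} (hc : 0 < c) (hcQ : ∀ x, c * ‖x‖ ^ 2 ≤ Q x)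
    {Θ : E → F} {J : E → E →L[ℝ] F} (hJ : ∀ γ ∈ Γ₀, HasStrictFDerivAt Θ (J γ) γ)
    (hΓ₀def : Γ₀ = {γ ∈ Γ | Θ γ = 0}) (hΓ₀ : IsCompact Γ₀) (hΓ₀ne : Γ₀.Nonempty)
    (hΓ₀int : Γ₀ ⊆ interior Γ) {κ C δ : ℝ} (hκ : κ ≤ 1) (hC : 0 < C) (hδ : 0 < δ)
    (hsep : ∀ ε ∈ Set.Ioc 0 δ, ∀ γ ∈ Γ, ε ≤ Metric.infDist γ Γ₀ → C * ε ^ κ ≤ ‖Θ γ‖)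
    {t : ι → ℝ} (ht : Tendsto t l (𝓝[>] 0)) {hn : ι → E → F} {h : E → F} {H : ℝ}
    (hh : ∀ γ ∈ Γ₀, ContinuousWithinAt h Γ γ) (hH : ∀ γ ∈ Γ, ‖h γ‖ ≤ H)
    (hconv : TendstoUniformlyOn hn h l Γ) :
    Tendsto (fun i => (⨅ γ : Γ, Q (Θ γ + t i • hn i γ)) / t i ^ 2) l
      (𝓝 (⨅ γ₀ : Γ₀, ⨅ v, Q (h γ₀ - J γ₀ v))) := by
  have hzero : ∀ γ ∈ Γ₀, Θ γ = 0 := fun γ hγ => (hΓ₀def ▸ hγ).2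
  have hΓ₀nonempty : Nonempty Γ₀ := hΓ₀ne.to_subtype
  have hΓnonempty : Nonempty Γ := (hΓ₀ne.mono (hΓ₀int.trans interior_subset)).to_subtype
  have hbdd {α : Type _} (u : α → F) : BddBelow (Set.range fun a => Q (u a)) :=
    ⟨0, Set.forall_mem_range.2 fun a => (by positivity : (0 : ℝ) ≤ c * ‖u a‖ ^ 2).trans (hcQ _)⟩
  have hsublevel (b : ℝ) (x : F) (hx : Q x < b) : ‖x‖ ≤ √(b / c) :=
    Real.le_sqrt_of_sq_le ((le_div_iff₀' hc).2 ((hcQ x).trans hx.le))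
  have hscale : ∀ᶠ i in l, ⨅ γ : Γ, Q ((t i)⁻¹ • Θ γ + hn i γ) =
      (⨅ γ : Γ, Q (Θ γ + t i • hn i γ)) / t i ^ 2 := by
    filter_upwards [(tendsto_nhdsWithin_iff.1 ht).2] with i hi
    exact (iInf_apply_add_smul_div_sq hQsmul (fun γ : Γ => Θ γ) (fun γ : Γ => hn i γ) hi.ne').symm
  rw [← ciInf_prod (f := fun p : Γ₀ × E => Q (h p.1 - J p.1 p.2)) (hbdd _)]
  refine (tendsto_ciInf_of_eventually (fun i => hbdd _) (hbdd _) (fun b hb => ?_)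
    fun a p ha => ?_).congr' hscale
  · simpa using eventually_forall_le_of_forall_lt_apply_sub hQ (hsublevel b) hΓ₀ hΓ₀ne hzero hJ hC
      (lt_min hδ one_pos) (fun _ => mul_min_infDist_le_norm_of_mul_rpow_le hκ hC.le hδ hsep)
      hh hH hconv ht fun g hg v => hb (⟨g, hg⟩, v)
  · obtain ⟨⟨g, hg⟩, v⟩ := p
    simpa using eventually_exists_lt_of_apply_sub_lt hQ (hJ g hg) (hzero g hg)
      (mem_interior_iff_mem_nhds.1 (hΓ₀int hg)) (hh g hg) hconv
      (ht.mono_right (nhdsGT_le_nhdsNE 0)) ha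

/-- Lemma C.3(ii): second order Hadamard directional derivative of the GMM
overidentification functional `φ(ϑ) = inf_{γ∈Γ} ϑ(γ)ᵀ W ϑ(γ)` at `θ = Θ|_Γ`, where `Θ` is
`C¹` with Jacobian `J(γ) = fderiv ℝ Θ γ`, the zero set `Γ₀` is nonempty and interior to
`Γ`, and an identification bound `‖θ(γ)‖ ≥ C·ε^κ` holds off `ε`-neighborhoods of `Γ₀`:
`φ(θ + t_n h_n)/t_n² → inf_{γ₀∈Γ₀} inf_{v∈ℝ^k} (h(γ₀) − J(γ₀)v)ᵀ W (h(γ₀) − J(γ₀)v)`. -/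
theorem gmm_overid_second_order_hadamard
    (k m : ℕ) (Γ : Set (EuclideanSpace ℝ (Fin k))) (hΓc : IsCompact Γ)
    (W : Matrix (Fin m) (Fin m) ℝ) (hWsymm : W.IsSymm) (hWpd : W.PosDef)
    (Θ : EuclideanSpace ℝ (Fin k) → EuclideanSpace ℝ (Fin m)) (hΘ : ContDiff ℝ 1 Θ)
    (Γ₀ : Set (EuclideanSpace ℝ (Fin k))) (hΓ₀def : Γ₀ = {γ ∈ Γ | Θ γ = 0})
    (hΓ₀ne : Γ₀.Nonempty) (hΓ₀int : Γ₀ ⊆ interior Γ)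
    (κ C εbar : ℝ) (hκ : κ ∈ Set.Ioc (0 : ℝ) 1) (hC : 0 < C) (hεbar : 0 < εbar)
    (hsep : ∀ ε ∈ Set.Ioc (0 : ℝ) εbar, ∀ γ ∈ Γ,
      ε ≤ Metric.infDist γ Γ₀ → C * ε ^ κ ≤ ‖Θ γ‖)
    (t : ℕ → ℝ) (ht : ∀ n, 0 < t n) (htlim : Tendsto t atTop (𝓝 0))
    (hn : ℕ → EuclideanSpace ℝ (Fin k) → EuclideanSpace ℝ (Fin m))
    (h : EuclideanSpace ℝ (Fin k) → EuclideanSpace ℝ (Fin m))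
    (hhnb : ∀ n, ∃ D, ∀ γ ∈ Γ, ‖hn n γ‖ ≤ D) (hhc : ContinuousOn h Γ)
    (hconv : ∀ ε > (0 : ℝ), ∀ᶠ n in atTop, ∀ γ ∈ Γ, ‖hn n γ - h γ‖ ≤ ε) :
    Tendsto (fun n =>
        (⨅ γ : Γ, (Θ (γ : EuclideanSpace ℝ (Fin k)) + t n • hn n γ) ⬝ᵥ
            W.mulVec (Θ (γ : EuclideanSpace ℝ (Fin k)) + t n • hn n γ)) / (t n) ^ 2)
      atTop
      (𝓝 (⨅ γ₀ : Γ₀, ⨅ v : EuclideanSpace ℝ (Fin k),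
            (h (γ₀ : EuclideanSpace ℝ (Fin k)) - fderiv ℝ Θ γ₀ v) ⬝ᵥ
              W.mulVec (h (γ₀ : EuclideanSpace ℝ (Fin k)) - fderiv ℝ Θ γ₀ v))) := by
  obtain ⟨c, hc, hcQ⟩ := exists_pos_mul_norm_sq_le_dotProduct_mulVec hWpd
  obtain ⟨H, hH⟩ := hΓc.exists_bound_of_continuousOn hhc
  have hΓ₀c : IsCompact Γ₀ :=
    hΓ₀def ▸ hΓc.inter_right (isClosed_eq hΘ.continuous continuous_const)
  have hunif : TendstoUniformlyOn hn h atTop Γ := Metric.tendstoUniformlyOn_iff.2 fun ε hε =>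
    (hconv (ε / 2) (half_pos hε)).mono fun n hle γ hγ =>
      (dist_eq_norm' _ _).trans_lt ((hle γ hγ).trans_lt (half_lt_self hε))
  exact gmm_overid_second_order_hadamard_general (continuous_dotProduct_mulVec W)
    (smul_dotProduct_mulVec_smul W) hc hcQ
    (fun γ _ => hΘ.contDiffAt.hasStrictFDerivAt one_ne_zero) hΓ₀def hΓ₀c hΓ₀ne hΓ₀int hκ.2 hC hεbar
    hsep (tendsto_nhdsWithin_iff.2 ⟨htlim, .of_forall ht⟩)
    (fun γ hγ => hhc.continuousWithinAt (interior_subset (hΓ₀int hγ))) hH hunif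
end
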